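/- arXiv:2504.03211 — 2 statements merged into one kernel-verified Lean document; each statement's English description precedes it below -/
import Mathlib

section
/- In the event-independent setting (U_i = U for all i), for any ε ≥ 0 and t ≥ 1, the supremum of V(f†) over all predictors f† generated by some perfectly calibrated predictor g̃ and some post-processing plan χ feasible for (g̃, ε, t) equals the supremum of V(f) over all finitely supported (ε,ℓ_t)-calibrated predictors f; moreover, if the latter supremum is attained by some (ε,ℓ_t)-calibrated predictor, then it is also attained by a predictor generated by a perfectly calibrated predictor and a feasible post-processing plan. -/
open Finset

noncomputable section

namespace PersuasiveCalibration

/-- The environment of the persuasive calibration problem: `n` events with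
probabilities `lam i > 0` summing to one and sorted expected outcomes `theta i ∈ [0,1]`. -/
structure Setup (n : ℕ) : Type where
  lam : Fin n → ℝ
  theta : Fin n → ℝ
  lam_pos : ∀ i, 0 < lam i
  lam_sum : ∑ i, lam i = 1
  theta_mono : Monotone theta
  theta_mem : ∀ i, theta i ∈ Set.Icc (0 : ℝ) 1

variable {n : ℕ}

/-- A finitely supported probability distribution on `[0,1]`. -/
def IsDist (μ : ℝ →₀ ℝ) : Prop :=
  (∀ p, 0 ≤ μ p) ∧ (∀ p ∈ μ.support, p ∈ Set.Icc (0 : ℝ) 1) ∧ (∑ p ∈ μ.support, μ p) = 1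

/-- A predictor assigns to each event a finitely supported probability distribution on `[0,1]`. -/
def IsPredictor (f : Fin n → ℝ →₀ ℝ) : Prop := ∀ i, IsDist (f i)

/-- The (unconditional) prediction space of a predictor. -/
def suppF (f : Fin n → ℝ →₀ ℝ) : Finset ℝ := Finset.univ.biUnion fun i => (f i).support

/-- The marginalized predictor `f(p) = ∑ i, λ i * f i p`. -/
def marginal (S : Setup n) (f : Fin n → ℝ →₀ ℝ) (p : ℝ) : ℝ := ∑ i, S.lam i * f i p

/-- The true expected outcome conditional on the prediction `p`. -/
def kappa (S : Setup n) (f : Fin n → ℝ →₀ ℝ) (p : ℝ) : ℝ :=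
  (∑ i, S.lam i * f i p * S.theta i) / marginal S f p

/-- The `ℓ_t`-norm expected calibration error of a predictor. -/
def ECE (S : Setup n) (t : ℝ) (f : Fin n → ℝ →₀ ℝ) : ℝ :=
  (∑ p ∈ suppF f, marginal S f p * |kappa S f p - p| ^ t) ^ (1 / t)

/-- The principal's expected payoff from predictor `f` with indirect utilities `U i`. -/
def payoff (S : Setup n) (U : Fin n → ℝ → ℝ) (f : Fin n → ℝ →₀ ℝ) : ℝ :=
  ∑ i, S.lam i * ∑ p ∈ (f i).support, f i p * U i p

/-- The principal's payoff in the event-independent setting. -/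
def payoffEI (S : Setup n) (U : ℝ → ℝ) (f : Fin n → ℝ →₀ ℝ) : ℝ :=
  payoff S (fun _ => U) f

/-- A predictor is perfectly calibrated if `κ(q) = q` on its support. -/
def PerfectlyCalibrated (S : Setup n) (g : Fin n → ℝ →₀ ℝ) : Prop :=
  ∀ q ∈ suppF g, kappa S g q = q

/-- An event-independent post-processing plan: a finitely supported probability
distribution on `[0,1] × [0,1]`; the first coordinate is `q`, the second is `p`. -/
def IsPlan (χ : ℝ × ℝ →₀ ℝ) : Prop :=
  (∀ x, 0 ≤ χ x) ∧ (∀ x ∈ χ.support, x.1 ∈ Set.Icc (0 : ℝ) 1 ∧ x.2 ∈ Set.Icc (0 : ℝ) 1) ∧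
    (∑ x ∈ χ.support, χ x) = 1

/-- The `ℓ_t` calibration cost `∑ χ(q,p) |q - p|^t` of a plan. -/
def planCost (t : ℝ) (χ : ℝ × ℝ →₀ ℝ) : ℝ := ∑ x ∈ χ.support, χ x * |x.1 - x.2| ^ t

/-- The `q`-marginal `∑_p χ(q, p)` of a plan. -/
def planMargQ (χ : ℝ × ℝ →₀ ℝ) (q : ℝ) : ℝ :=
  ∑ x ∈ χ.support.filter fun x => x.1 = q, χ x

/-- Feasibility of a post-processing plan for a perfectly calibrated predictor `g` and
an `ℓ_t` ECE budget `ε`. -/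
def FeasiblePlan (S : Setup n) (t ε : ℝ) (g : Fin n → ℝ →₀ ℝ) (χ : ℝ × ℝ →₀ ℝ) : Prop :=
  planCost t χ ≤ ε ^ t ∧ ∀ q, planMargQ χ q = marginal S g q

/-- The value `f_i(p) = ∑_q (g̃_i(q)/g(q)) χ(q,p)` of the predictor generated by `(g̃, χ)`. -/
def genVal (S : Setup n) (g : Fin n → ℝ →₀ ℝ) (χ : ℝ × ℝ →₀ ℝ) (i : Fin n) (p : ℝ) : ℝ :=
  ∑ q ∈ suppF g, g i q / marginal S g q * χ (q, p)

/-- A predictor generated by some perfectly calibrated predictor and some feasible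
event-independent post-processing plan. -/
def IsGenerated (S : Setup n) (t ε : ℝ) (f : Fin n → ℝ →₀ ℝ) : Prop :=
  ∃ (g : Fin n → ℝ →₀ ℝ) (χ : ℝ × ℝ →₀ ℝ),
    IsPredictor g ∧ PerfectlyCalibrated S g ∧ IsPlan χ ∧ FeasiblePlan S t ε g χ ∧
      ∀ i p, f i p = genVal S g χ i p

/-- The CDF of a finitely supported distribution. -/
def cdf (μ : ℝ →₀ ℝ) (x : ℝ) : ℝ := ∑ q ∈ μ.support.filter fun q => q ≤ x, μ q

/-- The CDF of the distribution placing mass `λ_i` at `θ_i`. -/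
def priorCdf (S : Setup n) (x : ℝ) : ℝ :=
  ∑ i ∈ Finset.univ.filter fun i => S.theta i ≤ x, S.lam i

/-- `μ` is a mean-preserving contraction of the distribution putting mass `λ_i` on `θ_i`. -/
def MPCprior (S : Setup n) (μ : ℝ →₀ ℝ) : Prop :=
  (∀ s ∈ Set.Icc (0 : ℝ) 1,
      (∫ x in (0 : ℝ)..s, cdf μ x) ≤ ∫ x in (0 : ℝ)..s, priorCdf S x) ∧
    (∫ x in (0 : ℝ)..(1 : ℝ), cdf μ x) = ∫ x in (0 : ℝ)..(1 : ℝ), priorCdf S x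

/-- The objective `∑ χ(q,p) U(p)` of the program LP-TwoStep. -/
def LPobj (U : ℝ → ℝ) (χ : ℝ × ℝ →₀ ℝ) : ℝ := ∑ x ∈ χ.support, χ x * U x.2

/-- Feasibility for the program LP-TwoStep. -/
def LPFeasible (S : Setup n) (ε t : ℝ) (χ : ℝ × ℝ →₀ ℝ) (g : ℝ →₀ ℝ) : Prop :=
  (∀ x, 0 ≤ χ x) ∧
  (∀ x ∈ χ.support, x.1 ∈ Set.Icc (0 : ℝ) 1 ∧ x.2 ∈ Set.Icc (0 : ℝ) 1) ∧
  planCost t χ ≤ ε ^ t ∧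
  (∀ q, planMargQ χ q = g q) ∧ IsDist g ∧ MPCprior S g

/-- The optimal value of LP-TwoStep. -/
def OPTLP (S : Setup n) (ε t : ℝ) (U : ℝ → ℝ) : ℝ :=
  sSup {v | ∃ (χ : ℝ × ℝ →₀ ℝ) (g : ℝ →₀ ℝ), LPFeasible S ε t χ g ∧ v = LPobj U χ}

/-- Symmetric linear-tailed convex function with linear tails `[0, xL]`, `[xH, 1]` and
tail slopes `s1`, `s2` of equal absolute value. -/
def SymLinTailedConvex (Γ : ℝ → ℝ) (xL xH s1 s2 : ℝ) : Prop :=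
  ConvexOn ℝ (Set.Icc (0 : ℝ) 1) Γ ∧ 0 ≤ xL ∧ xL ≤ xH ∧ xH ≤ 1 ∧ |s1| = |s2| ∧
    (∃ c1, ∀ x ∈ Set.Icc (0 : ℝ) xL, Γ x = c1 + s1 * x) ∧
    (∃ c2, ∀ x ∈ Set.Icc xH (1 : ℝ), Γ x = c2 + s2 * x)

/-- Tuples `(i, j, q, p)` indexing a bi-event post-processing plan. -/
abbrev BiTuple (n : ℕ) := Fin n × Fin n × ℝ × ℝ

/-- The contribution ratio `r_{i,j}(q)`. -/
def ratio (S : Setup n) (i j : Fin n) (q : ℝ) : ℝ :=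
  if S.theta i < S.theta j then (S.theta j - q) / (S.theta j - S.theta i) else 1

/-- The contribution of the tuple `x = (i', j', q, p)` to event `i`:
`r_{i,j'}(q)` if `i' = i`, and `1 - r_{i',i}(q)` if `j' = i ≠ i'`. -/
def contrib (S : Setup n) (x : BiTuple n) (i : Fin n) : ℝ :=
  (if x.1 = i then ratio S x.1 x.2.1 x.2.2.1 else 0) +
    (if x.2.1 = i ∧ x.1 ≠ i then 1 - ratio S x.1 x.2.1 x.2.2.1 else 0)

/-- A bi-event post-processing plan. -/
def IsBiPlan (S : Setup n) (χ : BiTuple n →₀ ℝ) : Prop :=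
  (∀ x, 0 ≤ χ x) ∧
    ∀ x ∈ χ.support, x.1 ≤ x.2.1 ∧ x.2.2.1 ∈ Set.Icc (0 : ℝ) 1 ∧
      x.2.2.2 ∈ Set.Icc (0 : ℝ) 1 ∧ S.theta x.1 ≤ x.2.2.1 ∧ x.2.2.1 ≤ S.theta x.2.1

/-- Feasibility of a bi-event post-processing plan for `ℓ_t` ECE budget `ε`. -/
def FeasibleBiPlan (S : Setup n) (t ε : ℝ) (χ : BiTuple n →₀ ℝ) : Prop :=
  IsBiPlan S χ ∧
    (∑ x ∈ χ.support, χ x * |x.2.2.1 - x.2.2.2| ^ t) ≤ ε ^ t ∧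
    ∀ i, (∑ x ∈ χ.support, χ x * contrib S x i) = S.lam i

/-- The value `f_i(p)` of the predictor generated by a bi-event post-processing plan. -/
def genValBi (S : Setup n) (χ : BiTuple n →₀ ℝ) (i : Fin n) (p : ℝ) : ℝ :=
  1 / S.lam i * ∑ x ∈ χ.support.filter fun x => x.2.2.2 = p, χ x * contrib S x i

/-- The objective of LP-TwoStep+: `∑ χ_{i,j}(q,p) U_{i,j}(q,p)`. -/
def biObj (S : Setup n) (U : Fin n → ℝ → ℝ) (χ : BiTuple n →₀ ℝ) : ℝ :=
  ∑ x ∈ χ.support, χ x * (ratio S x.1 x.2.1 x.2.2.1 * U x.1 x.2.2.2 +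
    (1 - ratio S x.1 x.2.1 x.2.2.1) * U x.2.1 x.2.2.2)

/-- The optimal value of LP-TwoStep+. -/
def OPTBi (S : Setup n) (U : Fin n → ℝ → ℝ) (t ε : ℝ) : ℝ :=
  sSup {v | ∃ χ : BiTuple n →₀ ℝ, FeasibleBiPlan S t ε χ ∧ v = biObj S U χ}

/-- `U` is piecewise constant with all its discontinuity points in `Z`. -/
def PiecewiseConstWrt (Z : Finset ℝ) (U : ℝ → ℝ) : Prop :=
  ∀ x ∈ Set.Icc (0 : ℝ) 1, ∀ y ∈ Set.Icc (0 : ℝ) 1,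
    (∀ z ∈ Z, z ∉ Set.uIcc x y) → U x = U y

/-- The bound `S = ⌈2 ln(1/δ) / ln(1+δ)⌉` of the second discretization layer. -/
def Sbound (δ : ℝ) : ℕ := ⌈2 * Real.log (1 / δ) / Real.log (1 + δ)⌉₊

/-- The instance-dependent two-layer discretized set `S_δ`. -/
def gridSet (S : Setup n) (Z : Finset ℝ) (ε t δ : ℝ) : Set ℝ :=
  ({x : ℝ | ∃ k : ℕ, x = (k : ℝ) * δ} ∪ {(1 : ℝ)} ∪ Set.range S.theta ∪ (↑Z : Set ℝ) ∪
      {x : ℝ | ∃ z ∈ (↑Z : Set ℝ) ∪ Set.range S.theta, ∃ s : ℕ, s ≤ Sbound δ ∧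
        (x = z + (ε ^ t * δ * (1 + δ) ^ s) ^ (1 / t) ∨
          x = z - (ε ^ t * δ * (1 + δ) ^ s) ^ (1 / t))}) ∩
    Set.Icc (0 : ℝ) 1

/-- Feasibility for the discretized program LP-DiscTwoStep+. -/
def DiscFeasibleBiPlan (S : Setup n) (Z : Finset ℝ) (t ε δ : ℝ) (χ : BiTuple n →₀ ℝ) : Prop :=
  FeasibleBiPlan S t ε χ ∧
    ∀ x ∈ χ.support, x.2.2.1 ∈ gridSet S Z ε t δ ∧ x.2.2.2 ∈ gridSet S Z ε t δ

/-- The optimal value of LP-DiscTwoStep+. -/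
def OPTBiDisc (S : Setup n) (U : Fin n → ℝ → ℝ) (Z : Finset ℝ) (t ε δ : ℝ) : ℝ :=
  sSup {v | ∃ χ : BiTuple n →₀ ℝ, DiscFeasibleBiPlan S Z t ε δ χ ∧ v = biObj S U χ}

/-- A Bayesian persuasion instance with signal-dependent bias: states `θ_i` with
prior `λ`, actions `A`, sender utility `u a i = u(a, θ_i) ≥ 0`, and receiver utility
determined by `v1 a = v(a,1)` and `v0 a = v(a,0)`. -/
structure PSetup (n : ℕ) (A : Type*) : Type _ where
  lam : Fin n → ℝ
  theta : Fin n → ℝ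
  u : A → Fin n → ℝ
  v1 : A → ℝ
  v0 : A → ℝ
  lam_pos : ∀ i, 0 < lam i
  lam_sum : ∑ i, lam i = 1
  theta_mem : ∀ i, theta i ∈ Set.Icc (0 : ℝ) 1
  u_nonneg : ∀ a i, 0 ≤ u a i

variable {A σT : Type*}

/-- The receiver's utility from action `a` at belief mean `x`. -/
def rcvU (P : PSetup n A) (a : A) (x : ℝ) : ℝ := x * P.v1 a + (1 - x) * P.v0 a

/-- The total probability `m(σ)` of a signal `σ`. -/
def mass [Fintype σT] (P : PSetup n A) (π : Fin n → σT → ℝ) (σ : σT) : ℝ :=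
  ∑ i, P.lam i * π i σ

/-- The biased posterior mean `p(σ)` of the receiver upon signal `σ`. -/
def belief [Fintype σT] (P : PSetup n A) (π : Fin n → σT → ℝ) (b : σT → ℝ) (σ : σT) : ℝ :=
  (b σ + ∑ i, P.lam i * π i σ * P.theta i) / mass P π σ

/-- Validity of a sender strategy `(π, b)`. -/
def ValidStrategy [Fintype σT] (P : PSetup n A) (π : Fin n → σT → ℝ) (b : σT → ℝ) : Prop :=
  (∀ i σ, 0 ≤ π i σ) ∧ (∀ i, ∑ σ, π i σ = 1) ∧
    ∀ σ, 0 < mass P π σ → belief P π b σ ∈ Set.Icc (0 : ℝ) 1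

/-- `astar` is a receiver best-response selection for the strategy `(π, b)`. -/
def BestResponse [Fintype σT] (P : PSetup n A) (π : Fin n → σT → ℝ) (b : σT → ℝ)
    (astar : σT → A) : Prop :=
  ∀ σ, 0 < mass P π σ → ∀ a, rcvU P a (belief P π b σ) ≤ rcvU P (astar σ) (belief P π b σ)

/-- The bounded-rationality constraint on the total bias. -/
def BRconstraint [Fintype σT] (P : PSetup n A) (t ε : ℝ) (π : Fin n → σT → ℝ)
    (b : σT → ℝ) : Prop :=
  (∑ σ, mass P π σ * |b σ / mass P π σ| ^ t) ^ (1 / t) ≤ ε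

/-- The sender's expected payoff from strategy `π` with receiver selection `astar`. -/
def senderPayoff [Fintype σT] (P : PSetup n A) (π : Fin n → σT → ℝ) (astar : σT → A) : ℝ :=
  ∑ i, P.lam i * ∑ σ, π i σ * P.u (astar σ) i

/-- Feasibility for the action-recommendation program P-ActRec. -/
def PActRecFeasible [Fintype A] (P : PSetup n A) (t ε : ℝ)
    (π : Fin n → A → ℝ) (b : A → ℝ) : Prop :=
  (∀ i a, 0 ≤ π i a) ∧ (∀ i, ∑ a, π i a = 1) ∧
  (∀ a, mass P π a = 0 → b a = 0) ∧
  (∑ a, mass P π a * |b a / mass P π a| ^ t) ≤ ε ^ t ∧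
  (∀ a, 0 ≤ b a + ∑ i, P.lam i * π i a * P.theta i) ∧
  (∀ a, b a + ∑ i, P.lam i * π i a * P.theta i ≤ mass P π a) ∧
  ∀ a a' : A,
    (b a + ∑ i, P.lam i * π i a * P.theta i) * P.v1 a' +
        (mass P π a - (b a + ∑ i, P.lam i * π i a * P.theta i)) * P.v0 a' ≤
      (b a + ∑ i, P.lam i * π i a * P.theta i) * P.v1 a +
        (mass P π a - (b a + ∑ i, P.lam i * π i a * P.theta i)) * P.v0 a

/-- The sender-side marginal probability of recommendation `a` (calibration model). -/
def pmass [Fintype A] (S : Setup n) (π : Fin n → A → ℝ) (a : A) : ℝ := ∑ i, S.lam i * π i a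

/-- The biased posterior mean associated with recommendation `a` (calibration model). -/
def pbelief [Fintype A] (S : Setup n) (π : Fin n → A → ℝ) (b : A → ℝ) (a : A) : ℝ :=
  (b a + ∑ i, S.lam i * π i a * S.theta i) / pmass S π a

theorem not_mem_suppF {f : Fin n → ℝ →₀ ℝ} {p : ℝ} (h : p ∉ suppF f) (i : Fin n) : f i p = 0 := by
  by_contra h'
  exact h (Finset.mem_biUnion.2 ⟨i, Finset.mem_univ i, Finsupp.mem_support_iff.2 h'⟩)

theorem support_subset_suppF (f : Fin n → ℝ →₀ ℝ) (i : Fin n) : (f i).support ⊆ suppF f :=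
  fun p hp => Finset.mem_biUnion.2 ⟨i, Finset.mem_univ i, hp⟩

theorem marginal_not_mem (S : Setup n) {f : Fin n → ℝ →₀ ℝ} {p : ℝ} (h : p ∉ suppF f) :
    marginal S f p = 0 := by
  unfold marginal
  exact Finset.sum_eq_zero fun i _ => by rw [not_mem_suppF h, mul_zero]

theorem marginal_nonneg (S : Setup n) {f : Fin n → ℝ →₀ ℝ} (hf : ∀ i p, 0 ≤ f i p) (p : ℝ) :
    0 ≤ marginal S f p :=
  Finset.sum_nonneg fun i _ => mul_nonneg (S.lam_pos i).le (hf i p)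

theorem marginal_pos (S : Setup n) {f : Fin n → ℝ →₀ ℝ} (hf : ∀ i p, 0 ≤ f i p) {p : ℝ}
    (h : p ∈ suppF f) : 0 < marginal S f p := by
  obtain ⟨i, _, hi⟩ := Finset.mem_biUnion.1 h
  have hi' : 0 < f i p := lt_of_le_of_ne (hf i p) (Ne.symm (Finsupp.mem_support_iff.1 hi))
  exact Finset.sum_pos' (fun i _ => mul_nonneg (S.lam_pos i).le (hf i p))
    ⟨i, Finset.mem_univ i, mul_pos (S.lam_pos i) hi'⟩

theorem suppF_mem_Icc {f : Fin n → ℝ →₀ ℝ} (hf : IsPredictor f) {p : ℝ} (h : p ∈ suppF f) :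
    p ∈ Set.Icc (0:ℝ) 1 := by
  obtain ⟨i, _, hi⟩ := Finset.mem_biUnion.1 h
  exact (hf i).2.1 p hi

theorem sum_support_eq (f : Fin n → ℝ →₀ ℝ) (i : Fin n) (h : ℝ → ℝ) {s : Finset ℝ}
    (hs : suppF f ⊆ s) :
    ∑ p ∈ (f i).support, f i p * h p = ∑ p ∈ s, f i p * h p := by
  apply Finset.sum_subset ((support_subset_suppF f i).trans hs)
  intro p _ hp
  rw [Finsupp.notMem_support_iff.1 hp, zero_mul]

theorem payoffEI_eq (S : Setup n) (U : ℝ → ℝ) (f : Fin n → ℝ →₀ ℝ) {s : Finset ℝ}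
    (hs : suppF f ⊆ s) :
    payoffEI S U f = ∑ p ∈ s, marginal S f p * U p := by
  unfold payoffEI payoff marginal
  simp_rw [sum_support_eq f _ U hs, Finset.mul_sum, Finset.sum_mul]
  rw [Finset.sum_comm]
  simp_rw [mul_assoc]

theorem sum_marg (S : Setup n) (f : Fin n → ℝ →₀ ℝ) (h : ℝ → ℝ) (s : Finset ℝ) :
    ∑ p ∈ s, marginal S f p * h p = ∑ i, S.lam i * ∑ p ∈ s, f i p * h p := by
  unfold marginal
  simp_rw [Finset.mul_sum, Finset.sum_mul]
  rw [Finset.sum_comm]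
  simp_rw [mul_assoc]

theorem ECE_le_iff (S : Setup n) {t ε : ℝ} (ht : 1 ≤ t) (hε : 0 ≤ ε) {f : Fin n → ℝ →₀ ℝ}
    (hf : IsPredictor f) : ECE S t f ≤ ε ↔
      ∑ p ∈ suppF f, marginal S f p * |kappa S f p - p| ^ t ≤ ε ^ t := by
  have h0 : 0 ≤ ∑ p ∈ suppF f, marginal S f p * |kappa S f p - p| ^ t :=
    Finset.sum_nonneg fun p _ => mul_nonneg (marginal_nonneg S (fun i => (hf i).1) p)
      (Real.rpow_nonneg (abs_nonneg _) _)
  unfold ECE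
  rw [one_div]
  exact Real.rpow_inv_le_iff_of_pos h0 hε (by linarith)

theorem jensen (t : ℝ) (ht : 1 ≤ t) (s : Finset ℝ) (w : ℝ → ℝ) (hw : ∀ q ∈ s, 0 ≤ w q)
    (hpos : 0 < ∑ q ∈ s, w q) (p : ℝ) :
    (∑ q ∈ s, w q) * |(∑ q ∈ s, w q * q) / (∑ q ∈ s, w q) - p| ^ t
      ≤ ∑ q ∈ s, w q * |q - p| ^ t := by
  set m := ∑ q ∈ s, w q with hm
  have h1 : ∑ q ∈ s, w q / m = 1 := by rw [← Finset.sum_div, ← hm, div_self hpos.ne']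
  have h2 : (∑ q ∈ s, w q * q) / m - p = ∑ q ∈ s, (w q / m) * (q - p) := by
    simp_rw [mul_sub, Finset.sum_sub_distrib, ← Finset.sum_mul, h1, one_mul, Finset.sum_div]
    congr 1
    exact Finset.sum_congr rfl fun q _ => by ring
  have h3 : |(∑ q ∈ s, w q * q) / m - p| ≤ ∑ q ∈ s, (w q / m) * |q - p| := by
    rw [h2]
    refine (Finset.abs_sum_le_sum_abs _ _).trans (Finset.sum_le_sum fun q hq => ?_)
    rw [abs_mul, abs_of_nonneg (div_nonneg (hw q hq) hpos.le)]
  have h4 := Real.rpow_arith_mean_le_arith_mean_rpow s (fun q => w q / m) (fun q => |q - p|)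
    (fun q hq => div_nonneg (hw q hq) hpos.le) h1 (fun q _ => abs_nonneg _) ht
  have h5 := (Real.rpow_le_rpow (abs_nonneg _) h3 (by linarith : (0:ℝ) ≤ t)).trans h4
  calc m * |(∑ q ∈ s, w q * q) / m - p| ^ t ≤ m * ∑ q ∈ s, w q / m * |q - p| ^ t :=
        mul_le_mul_of_nonneg_left h5 hpos.le
    _ = _ := by
        rw [Finset.mul_sum]
        refine Finset.sum_congr rfl fun q _ => ?_
        field_simp

theorem generated_ECE (S : Setup n) {t ε : ℝ} (ht : 1 ≤ t) (hε : 0 ≤ ε) {f : Fin n → ℝ →₀ ℝ}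
    (hf : IsPredictor f) (hg : IsGenerated S t ε f) : ECE S t f ≤ ε := by
  obtain ⟨g, χ, hgp, hpc, hχ, ⟨hcost, hmq⟩, hfg⟩ := hg
  rw [ECE_le_iff S ht hε hf]
  have hpos : ∀ q ∈ suppF g, 0 < marginal S g q := fun q hq =>
    marginal_pos S (fun i => (hgp i).1) hq
  have hw : ∀ (c : Fin n → ℝ) p, ∑ i, S.lam i * f i p * c i
      = ∑ q ∈ suppF g, χ (q, p) * ((∑ i, S.lam i * g i q * c i) / marginal S g q) := by
    intro c p
    simp_rw [hfg, genVal, Finset.mul_sum, Finset.sum_mul]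
    rw [Finset.sum_comm]
    refine Finset.sum_congr rfl fun q _ => ?_
    rw [Finset.sum_div, Finset.mul_sum]
    exact Finset.sum_congr rfl fun i _ => by ring
  have hmarg : ∀ p, marginal S f p = ∑ q ∈ suppF g, χ (q, p) := by
    intro p
    have := hw (fun _ => 1) p
    simp only [mul_one] at this
    rw [marginal, this]
    refine Finset.sum_congr rfl fun q hq => ?_
    change χ (q, p) * (marginal S g q / marginal S g q) = _
    rw [div_self (hpos q hq).ne', mul_one]
  have hmean : ∀ p, ∑ i, S.lam i * f i p * S.theta i = ∑ q ∈ suppF g, χ (q, p) * q := by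
    intro p
    rw [hw]
    refine Finset.sum_congr rfl fun q hq => ?_
    congr 1
    exact hpc q hq
  have hstep : ∀ p ∈ suppF f, marginal S f p * |kappa S f p - p| ^ t
      ≤ ∑ q ∈ suppF g, χ (q, p) * |q - p| ^ t := by
    intro p hp
    have h0 := marginal_pos S (fun i => (hf i).1) hp
    unfold kappa
    rw [hmean]
    rw [hmarg] at h0 ⊢
    exact jensen t ht _ (fun q => χ (q, p)) (fun q _ => hχ.1 _) h0 p
  refine (Finset.sum_le_sum hstep).trans (le_trans ?_ hcost)
  rw [Finset.sum_comm, ← Finset.sum_product (suppF g) (suppF f)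
    (fun x : ℝ × ℝ => χ x * |x.1 - x.2| ^ t)]
  unfold planCost
  rw [← Finset.sum_subset (Finset.inter_subset_left : suppF g ×ˢ suppF f ∩ χ.support ⊆ _)]
  · exact Finset.sum_le_sum_of_subset_of_nonneg Finset.inter_subset_right
      fun x _ _ => mul_nonneg (hχ.1 x) (Real.rpow_nonneg (abs_nonneg _) _)
  · intro x hx hx'
    have : x ∉ χ.support := fun h => hx' (Finset.mem_inter.2 ⟨hx, h⟩)
    rw [Finsupp.notMem_support_iff.1 this, zero_mul]

/-- The perfectly calibrated predictor obtained by merging predictions with equal `κ`. -/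
def mergeG (S : Setup n) (f : Fin n → ℝ →₀ ℝ) (i : Fin n) : ℝ →₀ ℝ :=
  Finsupp.onFinset ((suppF f).image (kappa S f))
    (fun q => ∑ p ∈ suppF f with kappa S f p = q, f i p) (by
      intro q hq
      obtain ⟨p, hp, _⟩ := Finset.exists_ne_zero_of_sum_ne_zero hq
      rw [Finset.mem_filter] at hp
      exact Finset.mem_image.2 ⟨p, hp⟩)

/-- The plan sending `κ(p)` to `p`. -/
def mergeChi (S : Setup n) (f : Fin n → ℝ →₀ ℝ) : ℝ × ℝ →₀ ℝ :=
  Finsupp.onFinset ((suppF f).image (fun p => (kappa S f p, p)))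
    (fun x => if x.1 = kappa S f x.2 then marginal S f x.2 else 0) (by
      intro x hx
      by_cases h : x.1 = kappa S f x.2
      · rw [if_pos h] at hx
        refine Finset.mem_image.2 ⟨x.2, ?_, ?_⟩
        · by_contra h'
          exact hx (marginal_not_mem S h')
        · rw [← h]
      · exact absurd (if_neg h) hx)

/-- The resulting generated predictor. -/
def mergeF (S : Setup n) (f : Fin n → ℝ →₀ ℝ) (i : Fin n) : ℝ →₀ ℝ :=
  Finsupp.onFinset (suppF f)
    (fun p => mergeG S f i (kappa S f p) / marginal S (mergeG S f) (kappa S f p) * marginal S f p)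
    (by
      intro p hp
      by_contra h'
      exact hp (by rw [marginal_not_mem S h', mul_zero]))

theorem mergeG_apply (S : Setup n) (f : Fin n → ℝ →₀ ℝ) (i : Fin n) (q : ℝ) :
    mergeG S f i q = ∑ p ∈ suppF f with kappa S f p = q, f i p := rfl

theorem mergeChi_apply (S : Setup n) (f : Fin n → ℝ →₀ ℝ) (x : ℝ × ℝ) :
    mergeChi S f x = if x.1 = kappa S f x.2 then marginal S f x.2 else 0 := rfl

theorem mergeF_apply (S : Setup n) (f : Fin n → ℝ →₀ ℝ) (i : Fin n) (p : ℝ) :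
    mergeF S f i p =
     mergeG S f i (kappa S f p) / marginal S (mergeG S f) (kappa S f p) * marginal S f p := rfl

theorem mergeG_sum (S : Setup n) (f : Fin n → ℝ →₀ ℝ) (i : Fin n) (h : ℝ → ℝ) :
    ∑ q ∈ (suppF f).image (kappa S f), mergeG S f i q * h q
      = ∑ p ∈ suppF f, f i p * h (kappa S f p) := by
  rw [← Finset.sum_fiberwise_of_maps_to
    (fun p hp => Finset.mem_image_of_mem (kappa S f) hp : ∀ p ∈ suppF f, kappa S f p ∈ _)]
  refine Finset.sum_congr rfl fun q _ => ?_
  rw [mergeG_apply, Finset.sum_mul]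
  exact Finset.sum_congr rfl fun p hp => by rw [(Finset.mem_filter.1 hp).2]

theorem mergeG_supp (S : Setup n) (f : Fin n → ℝ →₀ ℝ) :
    suppF (mergeG S f) ⊆ (suppF f).image (kappa S f) := by
  intro q hq
  obtain ⟨i, _, hi⟩ := Finset.mem_biUnion.1 hq
  exact Finsupp.support_onFinset_subset hi

theorem mergeF_supp (S : Setup n) (f : Fin n → ℝ →₀ ℝ) :
    suppF (mergeF S f) ⊆ suppF f := by
  intro q hq
  obtain ⟨i, _, hi⟩ := Finset.mem_biUnion.1 hq
  exact Finsupp.support_onFinset_subset hi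

theorem mergeChi_sum (S : Setup n) (f : Fin n → ℝ →₀ ℝ) (h : ℝ × ℝ → ℝ) :
    ∑ x ∈ (mergeChi S f).support, mergeChi S f x * h x
      = ∑ p ∈ suppF f, marginal S f p * h (kappa S f p, p) := by
  have hsub : (mergeChi S f).support ⊆ (suppF f).image (fun p => (kappa S f p, p)) :=
    Finsupp.support_onFinset_subset
  rw [Finset.sum_subset hsub]
  · rw [Finset.sum_image]
    · exact Finset.sum_congr rfl fun p _ => by rw [mergeChi_apply, if_pos rfl]
    · intro a _ b _ hab
      exact (Prod.ext_iff.1 hab).2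
  · intro x _ hx
    rw [Finsupp.notMem_support_iff.1 hx, zero_mul]

theorem kappa_mem (S : Setup n) {f : Fin n → ℝ →₀ ℝ} (hf : IsPredictor f) {p : ℝ}
    (hp : p ∈ suppF f) : kappa S f p ∈ Set.Icc (0:ℝ) 1 := by
  have h0 := marginal_pos S (fun i => (hf i).1) hp
  have hl : ∀ i, 0 ≤ S.lam i * f i p := fun i => mul_nonneg (S.lam_pos i).le ((hf i).1 p)
  unfold kappa
  constructor
  · exact div_nonneg (Finset.sum_nonneg fun i _ => mul_nonneg (hl i) (S.theta_mem i).1) h0.le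
  · rw [div_le_one h0]
    exact Finset.sum_le_sum fun i _ => mul_le_of_le_one_right (hl i) (S.theta_mem i).2

theorem mergeG_nonneg (S : Setup n) {f : Fin n → ℝ →₀ ℝ} (hf : IsPredictor f) (i : Fin n) (q : ℝ) :
    0 ≤ mergeG S f i q := by
  rw [mergeG_apply]
  exact Finset.sum_nonneg fun p _ => (hf i).1 p

theorem mergeG_sum_one (S : Setup n) {f : Fin n → ℝ →₀ ℝ} (hf : IsPredictor f) (i : Fin n) :
    ∑ q ∈ (suppF f).image (kappa S f), mergeG S f i q = 1 := by
  have h := mergeG_sum S f i (fun _ => 1)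
  have h2 := sum_support_eq f i (fun _ => 1) (subset_refl _)
  simp only [mul_one] at h h2
  rw [h, ← h2]
  exact (hf i).2.2

theorem mergeG_predictor (S : Setup n) {f : Fin n → ℝ →₀ ℝ} (hf : IsPredictor f) :
    IsPredictor (mergeG S f) := by
  intro i
  refine ⟨mergeG_nonneg S hf i, ?_, ?_⟩
  · intro q hq
    obtain ⟨p, hp, rfl⟩ := Finset.mem_image.1 (mergeG_supp S f (support_subset_suppF _ i hq))
    exact kappa_mem S hf hp
  · have h := sum_support_eq (mergeG S f) i (fun _ => 1) (mergeG_supp S f)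
    simp only [mul_one] at h
    rw [h, mergeG_sum_one S hf]

theorem mergeG_marg (S : Setup n) (f : Fin n → ℝ →₀ ℝ) (q : ℝ) :
    marginal S (mergeG S f) q = ∑ p ∈ suppF f with kappa S f p = q, marginal S f p := by
  unfold marginal
  simp_rw [mergeG_apply, Finset.mul_sum]
  rw [Finset.sum_comm]

theorem mergeG_calibrated (S : Setup n) {f : Fin n → ℝ →₀ ℝ} (hf : IsPredictor f) :
    PerfectlyCalibrated S (mergeG S f) := by
  intro q hq
  have h0 := marginal_pos S (mergeG_nonneg S hf) hq
  unfold kappa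
  rw [div_eq_iff h0.ne', mergeG_marg]
  simp_rw [mergeG_apply, Finset.mul_sum, Finset.sum_mul]
  rw [Finset.sum_comm]
  refine Finset.sum_congr rfl fun p hp => ?_
  obtain ⟨hp, hk⟩ := Finset.mem_filter.1 hp
  have h1 := marginal_pos S (fun i => (hf i).1) hp
  unfold kappa at hk
  rwa [div_eq_iff h1.ne'] at hk

theorem mergeG_marg_pos (S : Setup n) {f : Fin n → ℝ →₀ ℝ} (hf : IsPredictor f) {p : ℝ}
    (hp : p ∈ suppF f) : 0 < marginal S (mergeG S f) (kappa S f p) := by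
  rw [mergeG_marg]
  exact Finset.sum_pos' (fun p _ => marginal_nonneg S (fun i => (hf i).1) p)
    ⟨p, Finset.mem_filter.2 ⟨hp, rfl⟩, marginal_pos S (fun i => (hf i).1) hp⟩

theorem mergeF_marg (S : Setup n) {f : Fin n → ℝ →₀ ℝ} (hf : IsPredictor f) (p : ℝ) :
    marginal S (mergeF S f) p = marginal S f p := by
  by_cases hp : p ∈ suppF f
  · have h0 := mergeG_marg_pos S hf hp
    rw [marginal]
    simp_rw [mergeF_apply, ← mul_assoc, mul_div_assoc', ← Finset.sum_mul, ← Finset.sum_div]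
    change marginal S (mergeG S f) (kappa S f p) / _ * _ = _
    rw [div_self h0.ne', one_mul]
  · rw [marginal_not_mem S hp, marginal_not_mem S (fun h => hp (mergeF_supp S f h))]

theorem mergeF_predictor (S : Setup n) {f : Fin n → ℝ →₀ ℝ} (hf : IsPredictor f) :
    IsPredictor (mergeF S f) := by
  intro i
  refine ⟨fun p => ?_, ?_, ?_⟩
  · rw [mergeF_apply]
    exact mul_nonneg (div_nonneg (mergeG_nonneg S hf i _)
      (marginal_nonneg S (mergeG_nonneg S hf) _)) (marginal_nonneg S (fun i => (hf i).1) p)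
  · intro p hp
    exact suppF_mem_Icc hf (mergeF_supp S f (support_subset_suppF _ i hp))
  · have h := sum_support_eq (mergeF S f) i (fun _ => 1) (mergeF_supp S f)
    simp only [mul_one] at h
    rw [h, ← mergeG_sum_one S hf i]
    have e := sum_marg S f (fun p => mergeG S f i (kappa S f p) /
      marginal S (mergeG S f) (kappa S f p)) (suppF f)
    have e' : ∀ j, _ := fun j => mergeG_sum S f j
      (fun q => mergeG S f i q / marginal S (mergeG S f) q)
    simp_rw [mergeF_apply, mul_comm _ (marginal S f _), e, ← e']
    rw [← sum_marg]
    refine Finset.sum_congr rfl fun q hq => ?_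
    obtain ⟨p, hp, rfl⟩ := Finset.mem_image.1 hq
    rw [mul_div_cancel₀ _ (mergeG_marg_pos S hf hp).ne']

theorem mergeF_generated (S : Setup n) {t ε : ℝ} (ht : 1 ≤ t) (hε : 0 ≤ ε) {f : Fin n → ℝ →₀ ℝ}
    (hf : IsPredictor f) (hE : ECE S t f ≤ ε) : IsGenerated S t ε (mergeF S f) := by
  refine ⟨mergeG S f, mergeChi S f, mergeG_predictor S hf, mergeG_calibrated S hf,
    ⟨fun x => ?_, ?_, ?_⟩, ⟨?_, ?_⟩, ?_⟩
  · rw [mergeChi_apply]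
    split_ifs
    · exact marginal_nonneg S (fun i => (hf i).1) _
    · exact le_rfl
  · intro x hx
    obtain ⟨p, hp, rfl⟩ := Finset.mem_image.1 (Finsupp.support_onFinset_subset hx)
    exact ⟨kappa_mem S hf hp, suppF_mem_Icc hf hp⟩
  · have h := mergeChi_sum S f (fun _ => 1)
    rw [sum_marg] at h
    simp only [mul_one] at h
    rw [h, ← S.lam_sum]
    refine Finset.sum_congr rfl fun i _ => ?_
    have h2 := sum_support_eq f i (fun _ => 1) (subset_refl _)
    simp only [mul_one] at h2
    rw [← h2, (hf i).2.2, mul_one]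
  · rw [planCost, mergeChi_sum S f (fun x => |x.1 - x.2| ^ t)]
    exact (ECE_le_iff S ht hε hf).1 hE
  · intro q
    have h := mergeChi_sum S f (fun x => if x.1 = q then 1 else 0)
    simp only [mul_ite, mul_one, mul_zero, ← Finset.sum_filter] at h
    rw [planMargQ, h, mergeG_marg]
  · intro i p
    rw [genVal, mergeF_apply]
    simp only [mergeChi_apply, mul_ite, mul_zero]
    rw [Finset.sum_ite_eq']
    split_ifs with h
    · rfl
    · rw [not_mem_suppF h, zero_div, zero_mul]

theorem mergeF_payoff (S : Setup n) (U : ℝ → ℝ)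
    {f : Fin n → ℝ →₀ ℝ} (hf : IsPredictor f) :
    payoffEI S U (mergeF S f) = payoffEI S U f := by
  rw [payoffEI_eq S U f (subset_refl _), payoffEI_eq S U _ (mergeF_supp S f)]
  exact Finset.sum_congr rfl fun p _ => by rw [mergeF_marg S hf]

/-- In the event-independent setting, the supremum of the principal's
payoff over predictors generated by a perfectly calibrated predictor and a feasible
post-processing plan equals the supremum over all `(ε, ℓ_t)`-calibrated predictors;
and if the latter supremum is attained, it is attained by a generated predictor. -/
theorem statement2 {n : ℕ} (S : Setup n) (t ε : ℝ) (ht : 1 ≤ t) (hε : 0 ≤ ε)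
    (U : ℝ → ℝ) (hU0 : ∀ p ∈ Set.Icc (0 : ℝ) 1, 0 ≤ U p) :
    sSup {v | ∃ f : Fin n → ℝ →₀ ℝ,
        (IsGenerated S t ε f ∧ IsPredictor f) ∧ v = payoffEI S U f}
      = sSup {v | ∃ f : Fin n → ℝ →₀ ℝ,
        (IsPredictor f ∧ ECE S t f ≤ ε) ∧ v = payoffEI S U f} ∧
    ((∃ f : Fin n → ℝ →₀ ℝ, IsPredictor f ∧ ECE S t f ≤ ε ∧
        payoffEI S U f = sSup {v | ∃ f' : Fin n → ℝ →₀ ℝ,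
          (IsPredictor f' ∧ ECE S t f' ≤ ε) ∧ v = payoffEI S U f'}) →
      ∃ f : Fin n → ℝ →₀ ℝ, IsGenerated S t ε f ∧ IsPredictor f ∧
        payoffEI S U f = sSup {v | ∃ f' : Fin n → ℝ →₀ ℝ,
          (IsPredictor f' ∧ ECE S t f' ≤ ε) ∧ v = payoffEI S U f'}) := by
  refine ⟨?_, ?_⟩
  · congr 1
    ext v
    constructor
    · rintro ⟨f, ⟨hg, hf⟩, rfl⟩
      exact ⟨f, ⟨hf, generated_ECE S ht hε hf hg⟩, rfl⟩
    · rintro ⟨f, ⟨hf, hE⟩, rfl⟩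
      exact ⟨mergeF S f, ⟨mergeF_generated S ht hε hf hE, mergeF_predictor S hf⟩,
        (mergeF_payoff S U hf).symm⟩
  · rintro ⟨f, hf, hE, h⟩
    exact ⟨mergeF S f, mergeF_generated S ht hε hf hE, mergeF_predictor S hf,
      (mergeF_payoff S U hf).trans h⟩

end PersuasiveCalibration
end
end

section
/- In the event-independent setting (U_i = U for all i), for any ε ≥ 0 and t ≥ 1, the supremum of V(f) over all finitely supported (ε,ℓ_t)-calibrated predictors f equals OPT(LP-TwoStep), the optimal value of the program LP-TwoStep. -/
open Finset

noncomputable section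

namespace PersuasiveCalibration

variable {n : ℕ}

variable {A σT : Type*}

lemma integral_step (q s : ℝ) (hq : 0 ≤ q) (hs : 0 ≤ s) :
    (∫ x in (0:ℝ)..s, (if q ≤ x then (1:ℝ) else 0)) = max (s - q) 0 := by
  have h1 : (fun x : ℝ => if q ≤ x then (1:ℝ) else 0) = Set.indicator (Set.Ici q) (fun _ => (1:ℝ)) := by
    funext x; simp [Set.indicator]
  rw [h1, intervalIntegral.integral_of_le hs,
    MeasureTheory.setIntegral_indicator measurableSet_Ici]
  rcases hq.eq_or_lt with h | h
  · subst h
    have : Set.Ioc 0 s ∩ Set.Ici 0 = Set.Ioc 0 s := by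
      ext x; simp; intro a b; exact a.le
    rw [this]; simp [hs]
  · have : Set.Ioc 0 s ∩ Set.Ici q = Set.Icc q s := by
      ext x; simp; constructor
      · rintro ⟨⟨a, b⟩, c⟩; exact ⟨c, b⟩
      · rintro ⟨a, b⟩; exact ⟨⟨by linarith, b⟩, a⟩
    rw [this]; simp [MeasureTheory.measureReal_def, ENNReal.toReal_ofReal']

lemma integral_steps {ι : Type*} (T : Finset ι) (w q : ι → ℝ) (hq : ∀ i ∈ T, 0 ≤ q i) (s : ℝ)
    (hs : 0 ≤ s) :
    (∫ x in (0:ℝ)..s, ∑ i ∈ T.filter (fun i => q i ≤ x), w i) = ∑ i ∈ T, w i * max (s - q i) 0 := by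
  have h1 : (fun x : ℝ => ∑ i ∈ T.filter (fun i => q i ≤ x), w i)
      = fun x => ∑ i ∈ T, w i * (if q i ≤ x then (1:ℝ) else 0) := by
    funext x; rw [Finset.sum_filter]; simp
  rw [h1, intervalIntegral.integral_finsetSum]
  · refine Finset.sum_congr rfl fun i hi => ?_
    rw [intervalIntegral.integral_const_mul, integral_step _ _ (hq i hi) hs]
  · intro i _
    apply IntervalIntegrable.const_mul
    apply Monotone.intervalIntegrable
    intro x y hxy
    dsimp only
    split_ifs with h1 h2 h2
    · exact le_rfl
    · exact absurd (h1.trans hxy) h2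
    · norm_num
    · exact le_rfl

lemma MPC_iff (S : Setup n) (μ : ℝ →₀ ℝ) (hμ : ∀ p ∈ μ.support, p ∈ Set.Icc (0:ℝ) 1) :
    MPCprior S μ ↔
    (∀ s ∈ Set.Icc (0:ℝ) 1, ∑ q ∈ μ.support, μ q * max (s - q) 0
        ≤ ∑ i, S.lam i * max (s - S.theta i) 0) ∧
      ∑ q ∈ μ.support, μ q * (1 - q) = ∑ i, S.lam i * (1 - S.theta i) := by
  have e1 : ∀ s ∈ Set.Icc (0:ℝ) 1, (∫ x in (0 : ℝ)..s, cdf μ x)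
      = ∑ q ∈ μ.support, μ q * max (s - q) 0 := fun s hs =>
    integral_steps μ.support (fun q => μ q) (fun q => q) (fun q hq => (hμ q hq).1) s hs.1
  have e2 : ∀ s ∈ Set.Icc (0:ℝ) 1, (∫ x in (0 : ℝ)..s, priorCdf S x)
      = ∑ i, S.lam i * max (s - S.theta i) 0 := fun s hs =>
    integral_steps Finset.univ S.lam S.theta (fun q _ => (S.theta_mem q).1) s hs.1
  unfold MPCprior
  have h1 : (1:ℝ) ∈ Set.Icc (0:ℝ) 1 := by simp
  rw [e1 1 h1, e2 1 h1]
  refine and_congr (forall₂_congr fun s hs => by rw [e1 s hs, e2 s hs]) ?_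
  have a1 : ∑ q ∈ μ.support, μ q * max (1 - q) 0 = ∑ q ∈ μ.support, μ q * (1 - q) :=
    Finset.sum_congr rfl fun q hq => by rw [max_eq_left (by linarith [(hμ q hq).2])]
  have a2 : ∑ i, S.lam i * max (1 - S.theta i) 0 = ∑ i, S.lam i * (1 - S.theta i) :=
    Finset.sum_congr rfl fun q hq => by rw [max_eq_left (by linarith [(S.theta_mem q).2])]
  rw [a1, a2]

/-- Hinge representation of a convex function on a finite set. -/
lemma hinge_rep (φ : ℝ → ℝ) (hφ : ConvexOn ℝ Set.univ φ)
    (hsub : ∀ x, ∃ a b, a + b * x = φ x ∧ ∀ y, a + b * y ≤ φ y) (X : Finset ℝ) (hX : X.Nonempty) :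
    ∃ (a b : ℝ) (c : ℝ → ℝ), (∀ s, 0 ≤ c s) ∧
      (∀ x ∈ X, a + b * x + ∑ s ∈ X, c s * max (s - x) 0 = φ x) ∧
      (∀ y, (∀ x ∈ X, y < x) → a + b * y + ∑ s ∈ X, c s * max (s - y) 0 ≤ φ y) := by
  induction X using Finset.induction_on_min with
  | empty => exact absurd hX (by simp)
  | insert m X hm ih =>
    have hmX : m ∉ X := fun h => lt_irrefl _ (hm m h)
    rcases X.eq_empty_or_nonempty with rfl | hXn
    · obtain ⟨a, b, h1, h2⟩ := hsub m
      refine ⟨a, b, fun _ => 0, fun _ => le_rfl, ?_, ?_⟩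
      · simpa using h1
      · simpa using fun y _ => h2 y
    · obtain ⟨a, b, c, hc, he, hle⟩ := ih hXn
      set z := X.min' hXn with hz
      have hzX : z ∈ X := X.min'_mem hXn
      have hzle : ∀ x ∈ X, z ≤ x := fun x hx => X.min'_le x hx
      have hmz : m < z := hm z hzX
      set ψ : ℝ → ℝ := fun y => a + b * y + ∑ s ∈ X, c s * max (s - y) 0 with hψ
      set d := (φ m - ψ m) / (z - m) with hd
      have hd0 : 0 ≤ d := div_nonneg (by linarith [hle m hm]) (by linarith)
      have hdm : d * (z - m) = φ m - ψ m := div_mul_cancel₀ _ (by linarith)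
      have key : ∀ y, ∑ s ∈ insert m X, (if s = m then 0 else c s + if s = z then d else 0) * max (s - y) 0
          = ∑ s ∈ X, c s * max (s - y) 0 + d * max (z - y) 0 := by
        intro y
        rw [Finset.sum_insert hmX]
        have : ∀ s ∈ X, (if s = m then 0 else c s + if s = z then d else 0) * max (s - y) 0
          = c s * max (s - y) 0 + if s = z then d * max (z - y) 0 else 0 := by
          intro s hs
          rw [if_neg (by rintro rfl; exact hmX hs)]
          split_ifs with h
          · subst h; ring
          · ring
        rw [Finset.sum_congr rfl this, Finset.sum_add_distrib, Finset.sum_ite_eq' X z]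
        simp [hzX]
      have aff : ∃ A B : ℝ, ∀ y ≤ z, ψ y = A + B * y := by
        refine ⟨a + ∑ s ∈ X, c s * s, b - ∑ s ∈ X, c s, fun y hy => ?_⟩
        have : ∑ s ∈ X, c s * max (s - y) 0 = ∑ s ∈ X, (c s * s - c s * y) :=
          Finset.sum_congr rfl fun s hs => by
            rw [max_eq_left (by linarith [hzle s hs])]; ring
        rw [hψ]; dsimp only
        rw [this, Finset.sum_sub_distrib, ← Finset.sum_mul]; ring
      obtain ⟨A, B, hAB⟩ := aff
      refine ⟨a, b, fun s => if s = m then 0 else c s + if s = z then d else 0, ?_, ?_, ?_⟩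
      · intro s
        dsimp only
        split_ifs <;> first | exact le_rfl | linarith [hc s]
      · intro x hx
        rw [key, ← add_assoc]
        rcases Finset.mem_insert.1 hx with rfl | hx
        · rw [max_eq_left (by linarith), hdm]; simp [hψ]
        · rw [max_eq_right (by linarith [hzle x hx]), he x hx]; simp
      · intro y hy
        have hym : y < m := hy m (by simp)
        rw [key, ← add_assoc, max_eq_left (by linarith)]
        change ψ y + _ ≤ _
        have h1 := hAB y (by linarith)
        have h2 := hAB m hmz.le
        have h3 := hAB z le_rfl
        have h4 : ψ z = φ z := he z hzX
        have hcv := hφ.2 (Set.mem_univ y) (Set.mem_univ z)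
          (show 0 ≤ (z - m) / (z - y) from div_nonneg (by linarith) (by linarith))
          (show 0 ≤ (m - y) / (z - y) from div_nonneg (by linarith) (by linarith))
          (by rw [← add_div, div_eq_one_iff_eq (by linarith)]; ring)
        have hpt : ((z - m) / (z - y)) • y + ((m - y) / (z - y)) • z = m := by
          have : z - y ≠ 0 := by linarith
          simp only [smul_eq_mul]; field_simp; ring
        rw [hpt] at hcv
        simp only [smul_eq_mul] at hcv
        have hzy : 0 < z - y := by linarith
        have hcv2 : (z - y) * φ m ≤ (z - m) * φ y + (m - y) * φ z := by
          have := mul_le_mul_of_nonneg_left hcv hzy.le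
          have e : (z - y) * ((z - m) / (z - y) * φ y + (m - y) / (z - y) * φ z)
            = (z - m) * φ y + (m - y) * φ z := by field_simp
          linarith
        have hzm : 0 < z - m := by linarith
        have goal' : (z - m) * (ψ y + d * (z - y)) ≤ (z - m) * φ y := by
          have : (z - m) * (d * (z - y)) = (φ m - ψ m) * (z - y) := by rw [← hdm]; ring
          rw [mul_add, this]
          rw [h2, h1]
          have : φ z = A + B * z := by rw [← h4, h3]
          rw [this] at hcv2
          nlinarith
        exact le_of_mul_le_mul_left goal' hzm

lemma convex_order (S : Setup n) (g : ℝ →₀ ℝ) (hg : IsDist g) (hM : MPCprior S g)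
    (φ : ℝ → ℝ) (hφ : ConvexOn ℝ Set.univ φ)
    (hsub : ∀ x, ∃ a b, a + b * x = φ x ∧ ∀ y, a + b * y ≤ φ y) :
    ∑ q ∈ g.support, g q * φ q ≤ ∑ i, S.lam i * φ (S.theta i) := by
  classical
  obtain ⟨hM1, hM2⟩ := (MPC_iff S g hg.2.1).1 hM
  have hne : g.support.Nonempty := by
    rw [Finset.nonempty_iff_ne_empty]; intro h
    have := hg.2.2; rw [h] at this; simp at this
  set X := g.support ∪ Finset.univ.image S.theta with hX
  obtain ⟨a, b, c, hc, he, -⟩ := hinge_rep φ hφ hsub X (hne.mono Finset.subset_union_left)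
  have hX01 : ∀ s ∈ X, s ∈ Set.Icc (0:ℝ) 1 := by
    intro s hs
    rcases Finset.mem_union.1 hs with h | h
    · exact hg.2.1 s h
    · obtain ⟨i, -, rfl⟩ := Finset.mem_image.1 h; exact S.theta_mem i
  have gen : ∀ {ι : Type} (T : Finset ι) (w x : ι → ℝ), (∀ i ∈ T, x i ∈ X) → ∑ i ∈ T, w i = 1 →
      ∑ i ∈ T, w i * φ (x i) = a + b - b * ∑ i ∈ T, w i * (1 - x i) +
        ∑ s ∈ X, c s * ∑ i ∈ T, w i * max (s - x i) 0 := by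
    intro ι T w x hx hw
    have : ∀ i ∈ T, w i * φ (x i) = (a + b) * w i - b * (w i * (1 - x i)) +
        ∑ s ∈ X, c s * (w i * max (s - x i) 0) := by
      intro i hi
      rw [← he _ (hx i hi), mul_add, Finset.mul_sum]
      congr 1
      · ring
      · exact Finset.sum_congr rfl fun s _ => by ring
    rw [Finset.sum_congr rfl this, Finset.sum_add_distrib, Finset.sum_sub_distrib,
      ← Finset.mul_sum, ← Finset.mul_sum, hw, Finset.sum_comm]
    simp only [← Finset.mul_sum]
    ring
  rw [gen g.support g (fun q => q) (fun q hq => Finset.mem_union_left _ hq) hg.2.2,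
    gen Finset.univ S.lam S.theta
      (fun i _ => Finset.mem_union_right _ (Finset.mem_image_of_mem _ (Finset.mem_univ i))) S.lam_sum,
    hM2]
  gcongr with s hs
  · exact hc s
  · exact hM1 s (hX01 s hs)

lemma strassen (S : Setup n) (g : ℝ →₀ ℝ) (hg : IsDist g) (hM : MPCprior S g) :
    ∃ π : Fin n → g.support → ℝ, (∀ i q, 0 ≤ π i q) ∧ (∀ i, ∑ q, π i q = 1) ∧
      (∀ q, ∑ i, S.lam i * π i q = g q) ∧ ∀ q, ∑ i, S.lam i * π i q * (S.theta i - q) = 0 := by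
  classical
  have hne : g.support.Nonempty := by
    rw [Finset.nonempty_iff_ne_empty]; intro h
    have := hg.2.2; rw [h] at this; simp at this
  have : Nonempty g.support := hne.to_subtype
  let P : Set (Fin n → g.support → ℝ) := Set.pi Set.univ (fun _ => stdSimplex ℝ g.support)
  have hPc : IsCompact P := isCompact_univ_pi fun _ => isCompact_stdSimplex ℝ _
  have hPv : Convex ℝ P := convex_pi fun _ _ => convex_stdSimplex ℝ _
  let F : (Fin n → g.support → ℝ) →ₗ[ℝ] (g.support → ℝ) × (g.support → ℝ) :=
    { toFun := fun π => (fun q => ∑ i, S.lam i * π i q,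
        fun q => ∑ i, S.lam i * π i q * (S.theta i - q))
      map_add' := by
        intro x y
        ext q <;> simp [mul_add, add_mul, Finset.sum_add_distrib]
      map_smul' := by
        intro r x
        ext q <;> simp only [Pi.smul_apply, smul_eq_mul, RingHom.id_apply, Prod.smul_mk, Finset.mul_sum] <;>
          exact Finset.sum_congr rfl fun i _ => by ring }
  have hFc : Continuous F := F.continuous_of_finiteDimensional
  have hK : IsClosed (F '' P) := (hPc.image hFc).isClosed
  have hKv : Convex ℝ (F '' P) := hPv.linear_image F
  by_cases hmem : ((fun q : g.support => g q), (0 : g.support → ℝ)) ∈ F '' P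
  · obtain ⟨π, hπ, hF⟩ := hmem
    have hπ' : ∀ i, π i ∈ stdSimplex ℝ g.support := fun i => hπ i (Set.mem_univ i)
    refine ⟨π, fun i q => (hπ' i).1 q, fun i => (hπ' i).2, fun q => ?_, fun q => ?_⟩
    · exact congrFun (congrArg Prod.fst hF) q
    · exact congrFun (congrArg Prod.snd hF) q
  exfalso
  obtain ⟨L, u, hL1, hL2⟩ := geometric_hahn_banach_closed_point hKv hK hmem
  let a : g.support → ℝ := fun q => L (fun j => if q = j then 1 else 0, 0)
  let b : g.support → ℝ := fun q => L (0, fun j => if q = j then 1 else 0)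
  have hL : ∀ x y, L (x, y) = ∑ q, x q * a q + ∑ q, y q * b q := by
    intro x y
    have h1 : ((x, y) : (g.support → ℝ) × (g.support → ℝ)) = (x, 0) + (0, y) := by simp
    rw [h1, map_add]
    congr 1
    · have := LinearMap.pi_apply_eq_sum_univ (L.toLinearMap ∘ₗ LinearMap.inl ℝ (g.support → ℝ) (g.support → ℝ)) x
      simpa [a] using this
    · have := LinearMap.pi_apply_eq_sum_univ (L.toLinearMap ∘ₗ LinearMap.inr ℝ (g.support → ℝ) (g.support → ℝ)) y
      simpa [b] using this
  let φ : ℝ → ℝ := fun x => Finset.univ.sup' Finset.univ_nonempty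
    (fun q : g.support => a q + b q * (x - q))
  have hle : ∀ x q, a q + b q * (x - q) ≤ φ x := fun x q =>
    Finset.le_sup' (fun q : g.support => a q + b q * (x - q)) (Finset.mem_univ q)
  have hex : ∀ x, ∃ q, φ x = a q + b q * (x - q) := fun x => by
    obtain ⟨q, -, hq⟩ := Finset.exists_mem_eq_sup' Finset.univ_nonempty
      (fun q : g.support => a q + b q * (x - q))
    exact ⟨q, hq⟩
  have hcv : ConvexOn ℝ Set.univ φ := by
    refine ⟨convex_univ, fun x _ y _ α β hα hβ hαβ => ?_⟩
    obtain ⟨q, hq⟩ := hex (α • x + β • y)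
    rw [hq]
    have h1 := mul_le_mul_of_nonneg_left (hle x q) hα
    have h2 := mul_le_mul_of_nonneg_left (hle y q) hβ
    simp only [smul_eq_mul]
    have : β = 1 - α := by linarith
    subst this
    linarith
  have hsub : ∀ x, ∃ a b, a + b * x = φ x ∧ ∀ y, a + b * y ≤ φ y := by
    intro x
    obtain ⟨q, hq⟩ := hex x
    exact ⟨a q - b q * q, b q, by rw [hq]; ring, fun y => by have := hle y q; linarith⟩
  have hco := convex_order S g hg hM φ hcv hsub
  choose Q hQ using hex
  have h1 := hL1 (F (fun i => Pi.single (Q (S.theta i)) 1)) ⟨_, fun i _ => single_mem_stdSimplex ℝ _, rfl⟩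
  have h2 : L (F (fun i => Pi.single (Q (S.theta i)) 1)) = ∑ i, S.lam i * φ (S.theta i) := by
    change L (_, _) = _
    rw [hL]
    simp only [Finset.sum_mul]
    rw [Finset.sum_comm, Finset.sum_comm (s := Finset.univ) (t := Finset.univ)
      (f := fun (q : g.support) (i : Fin n) => _ * (S.theta i - q) * b q), ← Finset.sum_add_distrib]
    refine Finset.sum_congr rfl fun i _ => ?_
    rw [hQ, Finset.sum_eq_single (Q (S.theta i)), Finset.sum_eq_single (Q (S.theta i))]
    · simp; ring
    · intro q _ hq; simp [hq]
    · simp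
    · intro q _ hq; simp [hq]
    · simp
  rw [hL] at hL2
  have h3 : ∑ q : g.support, g q * a q ≤ ∑ q ∈ g.support, g q * φ q := by
    rw [← Finset.sum_coe_sort g.support (fun q => g q * φ q)]
    refine Finset.sum_le_sum fun q _ => mul_le_mul_of_nonneg_left ?_ (hg.1 q)
    simpa using hle q q
  simp only [Pi.zero_apply, zero_mul, Finset.sum_const_zero, add_zero] at hL2
  linarith

lemma sum_map {α β : Type*} (M : α →₀ ℝ) (k : α → β) (h : β → ℝ) :
    ∑ y ∈ (Finsupp.mapDomain k M).support, Finsupp.mapDomain k M y * h y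
      = ∑ x ∈ M.support, M x * h (k x) :=
  Finsupp.sum_mapDomain_index (h := fun y a => a * h y) (by simp) (by intros; ring)

lemma map_apply {α β : Type*} [DecidableEq β] (M : α →₀ ℝ) (k : α → β) (q : β) :
    Finsupp.mapDomain k M q = ∑ x ∈ M.support.filter (fun x => k x = q), M x := by
  classical
  rw [Finsupp.mapDomain, Finsupp.sum_apply, Finsupp.sum, Finset.sum_filter]
  refine Finset.sum_congr rfl fun x _ => ?_
  rw [Finsupp.single_apply]

lemma map_nonneg {α β : Type*} (M : α →₀ ℝ) (k : α → β) (hM : ∀ x, 0 ≤ M x) (q : β) :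
    0 ≤ Finsupp.mapDomain k M q := by
  classical
  rw [map_apply]; exact Finset.sum_nonneg fun x _ => hM x

lemma map_supp {α β : Type*} (M : α →₀ ℝ) (k : α → β) (q : β)
    (hq : q ∈ (Finsupp.mapDomain k M).support) : ∃ x ∈ M.support, k x = q := by
  classical
  have := Finsupp.mapDomain_support hq
  simpa using this

lemma sum_ext_supp {α : Type*} (M : α →₀ ℝ) (T : Finset α) (hT : M.support ⊆ T) (h : α → ℝ) :
    ∑ y ∈ M.support, M y * h y = ∑ y ∈ T, M y * h y :=
  Finset.sum_subset hT fun x _ hx => by simp [Finsupp.notMem_support_iff.1 hx]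

lemma ECE_iff (S : Setup n) (t ε : ℝ) (ht : 1 ≤ t) (hε : 0 ≤ ε) (f : Fin n → ℝ →₀ ℝ)
    (hf : ∀ i p, 0 ≤ f i p) :
    ECE S t f ≤ ε ↔ ∑ p ∈ suppF f, marginal S f p * |kappa S f p - p| ^ t ≤ ε ^ t := by
  unfold ECE
  have h0 : 0 ≤ ∑ p ∈ suppF f, marginal S f p * |kappa S f p - p| ^ t :=
    Finset.sum_nonneg fun p _ => mul_nonneg
      (Finset.sum_nonneg fun i _ => mul_nonneg (S.lam_pos i).le (hf i p)) (by positivity)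
  rw [one_div, Real.rpow_inv_le_iff_of_pos h0 hε (by linarith)]

lemma forward (S : Setup n) (t ε : ℝ) (ht : 1 ≤ t) (hε : 0 ≤ ε) (U : ℝ → ℝ)
    (f : Fin n → ℝ →₀ ℝ) (hf : IsPredictor f) (hE : ECE S t f ≤ ε) :
    ∃ (χ : ℝ × ℝ →₀ ℝ) (g : ℝ →₀ ℝ), LPFeasible S ε t χ g ∧ payoffEI S U f = LPobj U χ := by
  classical
  rw [ECE_iff S t ε ht hε f (fun i p => (hf i).1 p)] at hE
  set T := suppF f with hT
  have hsub : ∀ i, (f i).support ⊆ T := fun i => by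
    rw [hT, suppF]; exact Finset.subset_biUnion_of_mem (fun i => (f i).support) (Finset.mem_univ i)
  set M : ℝ →₀ ℝ := ∑ i, S.lam i • f i with hM
  have hMa : ∀ p, M p = marginal S f p := fun p => by
    simp [hM, marginal, Finsupp.finsetSum_apply]
  have hMT : M.support ⊆ T := by
    intro p hp
    by_contra h
    rw [Finsupp.mem_support_iff, hMa] at hp
    refine hp (Finset.sum_eq_zero fun i _ => ?_)
    rw [Finsupp.notMem_support_iff.1 fun h' => h (hsub i h'), mul_zero]
  have hM0 : ∀ p, 0 ≤ M p := fun p => by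
    rw [hMa]; exact Finset.sum_nonneg fun i _ => mul_nonneg (S.lam_pos i).le ((hf i).1 p)
  have hT01 : ∀ p ∈ T, p ∈ Set.Icc (0:ℝ) 1 := by
    intro p hp
    rw [hT, suppF, Finset.mem_biUnion] at hp
    obtain ⟨i, -, hi⟩ := hp
    exact (hf i).2.1 p hi
  -- sums against `f i` over `T`
  have hfT : ∀ i, ∑ p ∈ T, f i p = 1 := fun i => by
    have := sum_ext_supp (f i) T (hsub i) (fun _ => 1)
    simp only [mul_one] at this
    rw [← this]; exact (hf i).2.2
  have hkM : ∀ p, M p * kappa S f p = ∑ i, S.lam i * f i p * S.theta i := by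
    intro p
    rw [kappa, ← hMa]
    by_cases h : M p = 0
    · rw [h, zero_mul]
      symm
      have h' := h
      rw [hMa, marginal, Finset.sum_eq_zero_iff_of_nonneg
        (fun i _ => mul_nonneg (S.lam_pos i).le ((hf i).1 p))] at h'
      exact Finset.sum_eq_zero fun i hi => by rw [h' i hi, zero_mul]
    · exact mul_div_cancel₀ _ h
  have hk01 : ∀ p ∈ M.support, kappa S f p ∈ Set.Icc (0:ℝ) 1 := by
    intro p hp
    have hp' : 0 < M p := lt_of_le_of_ne (hM0 p) (Ne.symm (Finsupp.mem_support_iff.1 hp))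
    have h0 : ∀ i, 0 ≤ S.lam i * f i p := fun i => mul_nonneg (S.lam_pos i).le ((hf i).1 p)
    constructor
    · have : 0 ≤ M p * kappa S f p := by
        rw [hkM]; exact Finset.sum_nonneg fun i _ => mul_nonneg (h0 i) (S.theta_mem i).1
      exact nonneg_of_mul_nonneg_right this hp'
    · have : M p * kappa S f p ≤ M p * 1 := by
        rw [hkM, hMa, marginal, mul_one]
        exact Finset.sum_le_sum fun i _ => mul_le_of_le_one_right (h0 i) (S.theta_mem i).2
      exact le_of_mul_le_mul_left this hp'
  let χ : ℝ × ℝ →₀ ℝ := Finsupp.mapDomain (fun p => (kappa S f p, p)) M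
  let g : ℝ →₀ ℝ := Finsupp.mapDomain Prod.fst χ
  have hgs : ∀ h : ℝ → ℝ, ∑ q ∈ g.support, g q * h q = ∑ p ∈ M.support, M p * h (kappa S f p) := by
    intro h
    rw [sum_map χ Prod.fst h, sum_map M _ (fun x : ℝ × ℝ => h x.1)]
  have hχ0 : ∀ x, 0 ≤ χ x := map_nonneg _ _ hM0
  have hχs : ∀ x ∈ χ.support, x.1 ∈ Set.Icc (0 : ℝ) 1 ∧ x.2 ∈ Set.Icc (0 : ℝ) 1 := by
    intro x hx
    obtain ⟨p, hp, rfl⟩ := map_supp _ _ _ hx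
    exact ⟨hk01 p hp, hT01 p (hMT hp)⟩
  have hgsupp : ∀ p ∈ g.support, p ∈ Set.Icc (0:ℝ) 1 := by
    intro q hq
    obtain ⟨x, hx, rfl⟩ := map_supp _ _ _ hq
    exact (hχs x hx).1
  refine ⟨χ, g, ⟨hχ0, hχs, ?_, ?_, ⟨map_nonneg _ _ hχ0, hgsupp, ?_⟩, ?_⟩, ?_⟩
  · rw [planCost, sum_map M _ (fun x : ℝ × ℝ => |x.1 - x.2| ^ t),
      sum_ext_supp M T hMT (fun p => |kappa S f p - p| ^ t)]
    simpa only [hMa] using hE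
  · intro q
    rw [planMargQ, map_apply]
  · have := hgs (fun _ => 1)
    simp only [mul_one] at this
    rw [this]
    have h2 := sum_ext_supp M T hMT (fun _ => 1)
    simp only [mul_one] at h2
    rw [h2]
    simp only [hMa, marginal]
    rw [Finset.sum_comm]
    simp only [← Finset.mul_sum, hfT, mul_one, S.lam_sum]
  · rw [MPC_iff S g hgsupp]
    constructor
    · intro s hs
      rw [hgs (fun q => max (s - q) 0), sum_ext_supp M T hMT (fun p => max (s - kappa S f p) 0)]
      have h1 : ∀ p ∈ T, M p * max (s - kappa S f p) 0
          ≤ ∑ i, S.lam i * f i p * max (s - S.theta i) 0 := by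
        intro p _
        have h0 : ∀ i, 0 ≤ S.lam i * f i p := fun i => mul_nonneg (S.lam_pos i).le ((hf i).1 p)
        rw [mul_max_of_nonneg _ _ (hM0 p), mul_zero, mul_sub, hkM]
        apply max_le
        · rw [hMa, marginal, Finset.sum_mul, ← Finset.sum_sub_distrib]
          refine Finset.sum_le_sum fun i _ => ?_
          rw [← mul_sub]
          exact mul_le_mul_of_nonneg_left (le_max_left _ _) (h0 i)
        · exact Finset.sum_nonneg fun i _ => mul_nonneg (h0 i) (le_max_right _ _)
      refine (Finset.sum_le_sum h1).trans (le_of_eq ?_)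
      rw [Finset.sum_comm]
      refine Finset.sum_congr rfl fun i _ => ?_
      rw [← Finset.sum_mul, ← Finset.mul_sum, hfT, mul_one]
    · rw [hgs (fun q => 1 - q), sum_ext_supp M T hMT (fun p => 1 - kappa S f p)]
      have h1 : ∀ p ∈ T, M p * (1 - kappa S f p)
          = ∑ i, S.lam i * f i p * (1 - S.theta i) := by
        intro p _
        rw [mul_sub, hkM, mul_one, hMa, marginal, ← Finset.sum_sub_distrib]
        exact Finset.sum_congr rfl fun i _ => by ring
      rw [Finset.sum_congr rfl h1, Finset.sum_comm]
      refine Finset.sum_congr rfl fun i _ => ?_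
      rw [← Finset.sum_mul, ← Finset.mul_sum, hfT, mul_one]
  · rw [LPobj, sum_map M _ (fun x : ℝ × ℝ => U x.2), sum_ext_supp M T hMT U, payoffEI, payoff]
    simp only [hMa, marginal, Finset.sum_mul]
    rw [Finset.sum_comm]
    refine Finset.sum_congr rfl fun i _ => ?_
    rw [sum_ext_supp (f i) T (hsub i) U, Finset.mul_sum]
    exact Finset.sum_congr rfl fun p _ => by ring

lemma strassen' (S : Setup n) (g : ℝ →₀ ℝ) (hg : IsDist g) (hM : MPCprior S g) :
    ∃ W : Fin n → ℝ → ℝ, (∀ i q, 0 ≤ W i q) ∧ (∀ i, ∑ q ∈ g.support, g q * W i q = 1) ∧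
      (∀ q ∈ g.support, ∑ i, S.lam i * W i q = 1) ∧
      ∀ q ∈ g.support, ∑ i, S.lam i * W i q * S.theta i = q := by
  classical
  obtain ⟨π, h0, h1, h2, h3⟩ := strassen S g hg hM
  refine ⟨fun i q => if h : q ∈ g.support then π i ⟨q, h⟩ / g q else 0, ?_, ?_, ?_, ?_⟩
  · intro i q
    dsimp only
    split_ifs with h
    · exact div_nonneg (h0 _ _) (hg.1 q)
    · exact le_rfl
  · intro i
    rw [← h1 i, ← Finset.sum_coe_sort g.support]
    refine Finset.sum_congr rfl fun q _ => ?_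
    dsimp only
    rw [dif_pos q.2]
    exact mul_div_cancel₀ _ (Finsupp.mem_support_iff.1 q.2)
  · intro q hq
    have hq0 := Finsupp.mem_support_iff.1 hq
    simp only [dif_pos hq]
    have := h2 ⟨q, hq⟩
    simp only [← mul_div_assoc, ← Finset.sum_div]
    rw [this, div_self hq0]
  · intro q hq
    have hq0 := Finsupp.mem_support_iff.1 hq
    simp only [dif_pos hq]
    have e2 := h2 ⟨q, hq⟩
    have e3 := h3 ⟨q, hq⟩
    simp only [mul_sub, Finset.sum_sub_distrib, ← Finset.sum_mul] at e3
    rw [e2] at e3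
    simp only [← mul_div_assoc, div_mul_eq_mul_div, ← Finset.sum_div]
    rw [div_eq_iff hq0]
    dsimp only at e3 ⊢
    linarith

lemma jensen_s4 (t : ℝ) (ht : 1 ≤ t) {α : Type*} (T : Finset α) (c y : α → ℝ) (p m k : ℝ)
    (hc : ∀ x ∈ T, 0 ≤ c x) (hm : ∑ x ∈ T, c x = m) (hk : m ≠ 0 → k * m = ∑ x ∈ T, c x * y x) :
    m * |k - p| ^ t ≤ ∑ x ∈ T, c x * |y x - p| ^ t := by
  have hm0 : 0 ≤ m := hm ▸ Finset.sum_nonneg hc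
  rcases hm0.eq_or_lt with h | h
  · rw [← h, zero_mul]
    exact Finset.sum_nonneg fun x hx => mul_nonneg (hc x hx) (by positivity)
  have hk := hk h.ne'
  have h1 := Real.rpow_arith_mean_le_arith_mean_rpow T (fun x => c x / m) (fun x => |y x - p|)
    (fun x hx => div_nonneg (hc x hx) hm0) (by rw [← Finset.sum_div, hm, div_self h.ne'])
    (fun x _ => abs_nonneg _) ht
  have h2 : |k - p| ≤ ∑ x ∈ T, c x / m * |y x - p| := by
    have : k - p = ∑ x ∈ T, c x / m * (y x - p) := by
      simp only [div_mul_eq_mul_div, ← Finset.sum_div, mul_sub, Finset.sum_sub_distrib,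
        ← Finset.sum_mul]
      rw [hm, ← hk]; field_simp
    rw [this]
    refine (Finset.abs_sum_le_sum_abs _ _).trans (Finset.sum_le_sum fun x hx => ?_)
    rw [abs_mul, abs_of_nonneg (div_nonneg (hc x hx) hm0)]
  have h3 := (Real.rpow_le_rpow (abs_nonneg _) h2 (by linarith)).trans h1
  have h4 := mul_le_mul_of_nonneg_left h3 hm0
  refine h4.trans (le_of_eq ?_)
  rw [Finset.mul_sum]
  exact Finset.sum_congr rfl fun x _ => by field_simp

lemma backward (S : Setup n) (t ε : ℝ) (ht : 1 ≤ t) (hε : 0 ≤ ε) (U : ℝ → ℝ)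
    (χ : ℝ × ℝ →₀ ℝ) (g : ℝ →₀ ℝ) (hF : LPFeasible S ε t χ g) :
    ∃ f : Fin n → ℝ →₀ ℝ, (IsPredictor f ∧ ECE S t f ≤ ε) ∧ LPobj U χ = payoffEI S U f := by
  classical
  obtain ⟨hχ0, hχs, hcost, hmarg, hg, hMPC⟩ := hF
  obtain ⟨W, hW0, hW1, hW2, hW3⟩ := strassen' S g hg hMPC
  have hxg : ∀ x ∈ χ.support, x.1 ∈ g.support := by
    intro x hx
    rw [Finsupp.mem_support_iff, ← hmarg]
    have h1 : χ x ≤ planMargQ χ x.1 :=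
      Finset.single_le_sum (f := fun x => χ x) (fun y _ => hχ0 y) (by simpa using hx)
    have h2 : 0 < χ x := lt_of_le_of_ne (hχ0 x) (Ne.symm (Finsupp.mem_support_iff.1 hx))
    linarith
  let w : Fin n → ℝ × ℝ →₀ ℝ := fun i =>
    Finsupp.onFinset χ.support (fun x => χ x * W i x.1) (fun x hx => by
      rw [Finsupp.mem_support_iff]; intro h; exact hx (by rw [h, zero_mul]))
  have hw : ∀ i x, w i x = χ x * W i x.1 := fun i x => rfl
  have hws : ∀ i, (w i).support ⊆ χ.support := fun i => Finsupp.support_onFinset_subset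
  have hw0 : ∀ i x, 0 ≤ w i x := fun i x => mul_nonneg (hχ0 x) (hW0 _ _)
  let f : Fin n → ℝ →₀ ℝ := fun i => Finsupp.mapDomain Prod.snd (w i)
  have hfs : ∀ i (h : ℝ → ℝ), ∑ p ∈ (f i).support, f i p * h p
      = ∑ x ∈ χ.support, χ x * W i x.1 * h x.2 := by
    intro i h
    rw [sum_map (w i) Prod.snd h, sum_ext_supp (w i) _ (hws i) (fun x : ℝ × ℝ => h x.2)]
    rfl
  have hfa : ∀ i p, f i p = ∑ x ∈ χ.support.filter (fun x => x.2 = p), χ x * W i x.1 := by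
    intro i p
    rw [map_apply, Finset.sum_filter, Finset.sum_filter]
    refine Finset.sum_subset (hws i) fun x _ hx => ?_
    rw [Finsupp.notMem_support_iff.1 hx]; simp
  have hf0 : ∀ i p, 0 ≤ f i p := fun i p => map_nonneg _ _ (hw0 i) p
  have hma : ∀ p, marginal S f p = ∑ x ∈ χ.support.filter (fun x => x.2 = p), χ x := by
    intro p
    simp only [marginal, hfa, Finset.mul_sum]
    rw [Finset.sum_comm]
    refine Finset.sum_congr rfl fun x hx => ?_
    have := hW2 x.1 (hxg x (Finset.mem_filter.1 hx).1)
    calc _ = χ x * ∑ i, S.lam i * W i x.1 := by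
            rw [Finset.mul_sum]; exact Finset.sum_congr rfl fun i _ => by ring
      _ = _ := by rw [this, mul_one]
  have hnum : ∀ p, ∑ i, S.lam i * f i p * S.theta i
      = ∑ x ∈ χ.support.filter (fun x => x.2 = p), χ x * x.1 := by
    intro p
    simp only [hfa, Finset.mul_sum, Finset.sum_mul]
    rw [Finset.sum_comm]
    refine Finset.sum_congr rfl fun x hx => ?_
    have := hW3 x.1 (hxg x (Finset.mem_filter.1 hx).1)
    calc _ = χ x * ∑ i, S.lam i * W i x.1 * S.theta i := by
            rw [Finset.mul_sum]; exact Finset.sum_congr rfl fun i _ => by ring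
      _ = _ := by rw [this]
  refine ⟨f, ⟨fun i => ⟨hf0 i, ?_, ?_⟩, ?_⟩, ?_⟩
  · intro p hp
    obtain ⟨x, hx, rfl⟩ := map_supp _ _ _ hp
    exact (hχs x (hws i hx)).2
  · have := hfs i (fun _ => 1)
    simp only [mul_one] at this
    rw [this, ← hW1 i, ← Finset.sum_fiberwise_of_maps_to hxg]
    refine Finset.sum_congr rfl fun q _ => ?_
    rw [← hmarg q, planMargQ, Finset.sum_mul]
    refine Finset.sum_congr rfl fun x hx => ?_
    rw [(Finset.mem_filter.1 hx).2]
  · rw [ECE_iff S t ε ht hε f hf0]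
    refine le_trans ?_ hcost
    have h1 : ∀ p ∈ suppF f, marginal S f p * |kappa S f p - p| ^ t
        ≤ ∑ x ∈ χ.support.filter (fun x => x.2 = p), χ x * |x.1 - x.2| ^ t := by
      intro p _
      refine (jensen_s4 t ht (χ.support.filter (fun x => x.2 = p)) (fun x => χ x) Prod.fst p
        (marginal S f p) (kappa S f p) (fun x _ => hχ0 x) (hma p).symm ?_).trans (le_of_eq ?_)
      · intro h
        rw [kappa, div_mul_cancel₀ _ h, hnum]
      · refine Finset.sum_congr rfl fun x hx => ?_
        rw [(Finset.mem_filter.1 hx).2]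
    refine (Finset.sum_le_sum h1).trans ?_
    refine (Finset.sum_le_sum_of_subset_of_nonneg
      (Finset.subset_union_left (s₂ := χ.support.image Prod.snd)) fun p _ _ =>
        Finset.sum_nonneg fun x _ => mul_nonneg (hχ0 x) (by positivity)).trans (le_of_eq ?_)
    exact Finset.sum_fiberwise_of_maps_to (fun x hx =>
      Finset.mem_union_right _ (Finset.mem_image_of_mem _ hx)) _
  · simp only [payoffEI, payoff, hfs, Finset.mul_sum]
    rw [LPobj, Finset.sum_comm]
    refine Finset.sum_congr rfl fun x hx => ?_
    have := hW2 x.1 (hxg x hx)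
    calc _ = χ x * U x.2 * ∑ i, S.lam i * W i x.1 := by rw [this, mul_one]
      _ = _ := by rw [Finset.mul_sum]; exact Finset.sum_congr rfl fun i _ => by ring

/-- In the event-independent setting, the supremum of the principal's
payoff over all finitely supported `(ε, ℓ_t)`-calibrated predictors equals the optimal
value of LP-TwoStep. -/
theorem statement4 {n : ℕ} (S : Setup n) (t ε : ℝ) (ht : 1 ≤ t) (hε : 0 ≤ ε)
    (U : ℝ → ℝ) (hU0 : ∀ p ∈ Set.Icc (0 : ℝ) 1, 0 ≤ U p) :
    sSup {v | ∃ f : Fin n → ℝ →₀ ℝ,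
        (IsPredictor f ∧ ECE S t f ≤ ε) ∧ v = payoffEI S U f}
      = OPTLP S ε t U := by
  unfold OPTLP
  congr 1
  ext v
  constructor
  · rintro ⟨f, ⟨hf, hE⟩, rfl⟩
    exact forward S t ε ht hε U f hf hE
  · rintro ⟨χ, g, hF, rfl⟩
    exact backward S t ε ht hε U χ g hF

end PersuasiveCalibration
end
end
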